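/- Let L = {<} ∪ {c_n | n < ω} and let T = Th(ℚ, <, (n)_{n<ω}), where c_n is interpreted as the natural number n. In a sufficiently saturated model M̄ of T, let a < b be elements with c_n < a for all n < ω. Then: tp(a) = tp(b); tp(b/a) is isolated; tp(a/b) is not isolated; neither tp(a/b) nor tp(b/a) forks over ∅; and for any elements a′, b′, c′ of M̄ with tp(a′,b′) = tp(b′,c′) = tp(a,b), the type tp(b′/a′c′) forks over ∅. -/

import Mathlib

open FirstOrder Cardinal

namespace KimPaper

/-- A first-order formula in `n` free variables together with a tuple of
parameters from `M`. -/
def FP (L : FirstOrder.Language.{0, 0}) (M : Type) (n : ℕ) : Type :=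
  Σ k : ℕ, L.Formula (Fin n ⊕ Fin k) × (Fin k → M)

/-- Realization of a formula-with-parameters by a tuple. -/
def FP.Realize {L : FirstOrder.Language.{0, 0}} {M : Type} [L.Structure M] {n : ℕ}
    (F : FP L M n) (a : Fin n → M) : Prop :=
  F.2.1.Realize (Sum.elim a F.2.2)

/-- All parameters of the formula-with-parameters `F` lie in the set `A`. -/
def FP.ParamsIn {L : FirstOrder.Language.{0, 0}} {M : Type} {n : ℕ}
    (F : FP L M n) (A : Set M) : Prop :=
  ∀ i, F.2.2 i ∈ A

/-- The tuples `a` and `b` have the same complete type over the set `A`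
(i.e. `tp(a/A) = tp(b/A)`). -/
def SameType (L : FirstOrder.Language.{0, 0}) {M : Type} [L.Structure M]
    (A : Set M) {n : ℕ} (a b : Fin n → M) : Prop :=
  ∀ (k : ℕ) (φ : L.Formula (Fin n ⊕ Fin k)) (c : Fin k → M),
    (∀ i, c i ∈ A) → (φ.Realize (Sum.elim a c) ↔ φ.Realize (Sum.elim b c))

/-- The complete type of the tuple `a` over the set `A`: the collection of all
formulas with parameters in `A` realized by `a`. -/
def Tp (L : FirstOrder.Language.{0, 0}) {M : Type} [L.Structure M]
    (A : Set M) {n : ℕ} (a : Fin n → M) : Set (FP L M n) :=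
  {F | F.ParamsIn A ∧ F.Realize a}

/-- The (partial) type `p` entails the formula-with-parameters `F`. -/
def Entails {L : FirstOrder.Language.{0, 0}} {M : Type} [L.Structure M] {n : ℕ}
    (p : Set (FP L M n)) (F : FP L M n) : Prop :=
  ∀ a : Fin n → M, (∀ G ∈ p, G.Realize a) → F.Realize a

/-- The (partial) type `p` forks over the set `A`: there are a formula
`φ(x̄, ȳ)`, tuples `c i` all having the same type over `A`, and `k < ω` such
that `p ⊢ φ(x̄, c 0)` and `{φ(x̄, c i) | i < ω}` is `k`-inconsistent. -/
def ForksOver {L : FirstOrder.Language.{0, 0}} {M : Type} [L.Structure M] {n : ℕ}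
    (p : Set (FP L M n)) (A : Set M) : Prop :=
  ∃ (m : ℕ) (φ : L.Formula (Fin n ⊕ Fin m)) (c : ℕ → Fin m → M) (k : ℕ),
    (∀ i : ℕ, SameType L A (c i) (c 0)) ∧
    Entails p ⟨m, (φ, c 0)⟩ ∧
    ∀ s : Finset ℕ, s.card = k →
      ¬ ∃ a : Fin n → M, ∀ i ∈ s, φ.Realize (Sum.elim a (c i))

/-- The family of sets `C` is independent over `A`: for every `i` and every
tuple `c` from `C i`, `tp(c / A ∪ ⋃_{j ≠ i} C j)` does not fork over `A`. -/
def IndepFamily (L : FirstOrder.Language.{0, 0}) {M : Type} [L.Structure M]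
    {ι : Type} (A : Set M) (C : ι → Set M) : Prop :=
  ∀ (i : ι) (n : ℕ) (c : Fin n → M), (∀ j, c j ∈ C i) →
    ¬ ForksOver (Tp L (A ∪ ⋃ (j : ι) (_ : j ≠ i), C j) c) A

/-- The tuples `a` and `b` have the same complete type over `∅`. -/
def TpEq (L : FirstOrder.Language.{0, 0}) {M : Type} [L.Structure M] {n : ℕ}
    (a b : Fin n → M) : Prop :=
  ∀ ψ : L.Formula (Fin n), ψ.Realize a ↔ ψ.Realize b

/-- `tp(a/b)` is isolated: some formula `φ(x̄, b)` realized by `a` implies every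
formula over `b` realized by `a`. -/
def IsolatedOver (L : FirstOrder.Language.{0, 0}) {M : Type} [L.Structure M]
    {n m : ℕ} (a : Fin n → M) (b : Fin m → M) : Prop :=
  ∃ φ : L.Formula (Fin n ⊕ Fin m), φ.Realize (Sum.elim a b) ∧
    ∀ a' : Fin n → M, φ.Realize (Sum.elim a' b) →
      ∀ ψ : L.Formula (Fin n ⊕ Fin m),
        ψ.Realize (Sum.elim a b) → ψ.Realize (Sum.elim a' b)

/-- `tp(a/b)` is semi-isolated: some formula `φ(x̄, b)` realized by `a` implies
`tp(a)` (the complete type of `a` over `∅`). -/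
def SemiIsolatedOver (L : FirstOrder.Language.{0, 0}) {M : Type} [L.Structure M]
    {n m : ℕ} (a : Fin n → M) (b : Fin m → M) : Prop :=
  ∃ φ : L.Formula (Fin n ⊕ Fin m), φ.Realize (Sum.elim a b) ∧
    ∀ a' : Fin n → M, φ.Realize (Sum.elim a' b) →
      ∀ ψ : L.Formula (Fin n), ψ.Realize a → ψ.Realize a'

/-- `tp(a)` (over `∅`) is isolated. -/
def Isolated0 (L : FirstOrder.Language.{0, 0}) {M : Type} [L.Structure M]
    {n : ℕ} (a : Fin n → M) : Prop :=
  ∃ φ : L.Formula (Fin n), φ.Realize a ∧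
    ∀ a' : Fin n → M, φ.Realize a' →
      ∀ ψ : L.Formula (Fin n), ψ.Realize a → ψ.Realize a'

/-- `M` is `κ`-saturated: every finitely satisfiable set of formulas over a
parameter set of size `< κ` is realized in `M`. -/
def Saturated (L : FirstOrder.Language.{0, 0}) (M : Type) [L.Structure M]
    (κ : Cardinal.{0}) : Prop :=
  ∀ (n : ℕ) (A : Set M) (p : Set (FP L M n)),
    #A < κ → (∀ F ∈ p, F.ParamsIn A) →
    (∀ s : Finset (FP L M n), ↑s ⊆ p → ∃ a : Fin n → M, ∀ F ∈ s, F.Realize a) →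
    ∃ a : Fin n → M, ∀ F ∈ p, F.Realize a

/-- `M` is strongly `κ`-homogeneous: every partial elementary map defined on a
set of size `< κ` extends to an automorphism of `M`. -/
def StronglyHomogeneous (L : FirstOrder.Language.{0, 0}) (M : Type) [L.Structure M]
    (κ : Cardinal.{0}) : Prop :=
  ∀ (A : Set M) (f : M → M), #A < κ →
    (∀ (n : ℕ) (φ : L.Formula (Fin n)) (a : Fin n → M), (∀ i, a i ∈ A) →
      (φ.Realize a ↔ φ.Realize (f ∘ a))) →
    ∃ σ : M ≃[L] M, ∀ x ∈ A, σ x = f x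

/-- `M` is a simple structure: every complete type over a set `B` does not fork
over some subset `A ⊆ B` of size at most `|T| = |L| + ℵ₀`. -/
def SimpleStruct (L : FirstOrder.Language.{0, 0}) (M : Type) [L.Structure M] : Prop :=
  ∀ (n : ℕ) (B : Set M) (a : Fin n → M),
    ∃ A : Set M, A ⊆ B ∧ #A ≤ L.card + ℵ₀ ∧ ¬ ForksOver (Tp L B a) A

/-- `M` is a supersimple structure: every complete type over a set `B` does not
fork over some finite subset of `B`. -/
def SupersimpleStruct (L : FirstOrder.Language.{0, 0}) (M : Type) [L.Structure M] : Prop :=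
  ∀ (n : ℕ) (B : Set M) (a : Fin n → M),
    ∃ A : Set M, A ⊆ B ∧ A.Finite ∧ ¬ ForksOver (Tp L B a) A


/-- The language `{<} ∪ {c_n | n < ω}`: countably many constants and one
binary relation. -/
def LO : FirstOrder.Language.{0, 0} :=
  ⟨fun n => match n with | 0 => ℕ | _ => Empty,
   fun n => match n with | 2 => Unit | _ => Empty⟩

/-- The standard model `(ℚ, <, (n)_{n<ω})`. -/
noncomputable instance : LO.Structure ℚ where
  funMap {n} f x :=
    match n, f with
    | 0, k => ((show ℕ from k : ℕ) : ℚ)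
  RelMap {n} r x :=
    match n, r with
    | 2, _ => x 0 < x 1

/-- The interpretation of `<` in an `LO`-structure. -/
def ltM {M : Type} [LO.Structure M] (x y : M) : Prop :=
  Language.Structure.RelMap (L := LO) (show LO.Relations 2 from Unit.unit) ![x, y]

/-- The interpretation of the constant `c_k` in an `LO`-structure. -/
def constM {M : Type} [LO.Structure M] (k : ℕ) : M :=
  Language.Structure.funMap (L := LO) (show LO.Functions 0 from k) ![]

open Language

/-- The relation symbol `<`. -/
def ltSym : LO.Relations 2 := Unit.unit

/-- The constant symbol `c_k`. -/
def cSym (k : ℕ) : LO.Functions 0 := k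

/-- The formula `t₁ < t₂`. -/
def ltF {α : Type} {n : ℕ} (t₁ t₂ : LO.Term (α ⊕ Fin n)) : LO.BoundedFormula α n :=
  ltSym.boundedFormula₂ t₁ t₂

/-- The constant term `c_k`. -/
def cT {α : Type} (k : ℕ) : LO.Term α := Term.func (cSym k) ![]

theorem realize_ltF {M : Type} [LO.Structure M] {α : Type} {n : ℕ}
    (t₁ t₂ : LO.Term (α ⊕ Fin n)) (u : α → M) (xs : Fin n → M) :
    (ltF t₁ t₂).Realize u xs ↔
      ltM (t₁.realize (Sum.elim u xs)) (t₂.realize (Sum.elim u xs)) := by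
  unfold ltF
  rw [BoundedFormula.realize_rel₂]
  rfl

theorem realize_cT {M : Type} [LO.Structure M] {α : Type} (k : ℕ) (u : α → M) :
    (cT k : LO.Term α).realize u = constM k := by
  unfold cT constM
  rw [Term.realize_func]
  congr 1
  funext i
  exact i.elim0

theorem ltM_rat (x y : ℚ) : ltM x y ↔ x < y := Iff.rfl

theorem constM_rat (k : ℕ) : (constM k : ℚ) = k := rfl

theorem transfer {M : Type} [LO.Structure M] (h : M ⊨ LO.completeTheory ℚ)
    (σ : LO.Sentence) (hs : ℚ ⊨ σ) : M ⊨ σ :=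
  h.realize_of_mem σ hs

section transferred
variable {M : Type} [LO.Structure M] (h : M ⊨ LO.completeTheory ℚ)

theorem t_irrefl (h : M ⊨ LO.completeTheory ℚ) (x : M) : ¬ ltM x x := by
  have := transfer h (∀' ∼(ltF (&0) (&0))) (by
    simp [Sentence.Realize, Formula.Realize, realize_ltF, ltM_rat])
  simp [Sentence.Realize, Formula.Realize, realize_ltF] at this
  exact this x

theorem t_trans (h : M ⊨ LO.completeTheory ℚ) (x y z : M) (h1 : ltM x y) (h2 : ltM y z) :
    ltM x z := by
  have := transfer h (∀' ∀' ∀' ((ltF (&0) (&1)).imp ((ltF (&1) (&2)).imp (ltF (&0) (&2))))) (by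
    simp [Sentence.Realize, Formula.Realize, realize_ltF, ltM_rat, Fin.snoc]
    intro a b c; exact lt_trans)
  simp [Sentence.Realize, Formula.Realize, realize_ltF, Fin.snoc] at this
  exact this x y z h1 h2

theorem t_total (h : M ⊨ LO.completeTheory ℚ) (x y : M) (h1 : ¬ ltM x y) (h2 : ¬ ltM y x) :
    x = y := by
  have := transfer h (∀' ∀' ((∼(ltF (&0) (&1))).imp ((∼(ltF (&1) (&0))).imp
      (Term.bdEqual (&0) (&1))))) (by
    simp [Sentence.Realize, Formula.Realize, realize_ltF, ltM_rat, Fin.snoc]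
    intro a b h1 h2; exact le_antisymm h2 h1)
  simp [Sentence.Realize, Formula.Realize, realize_ltF, Fin.snoc] at this
  exact this x y h1 h2

theorem t_dense (h : M ⊨ LO.completeTheory ℚ) (x y : M) (h1 : ltM x y) :
    ∃ z, ltM x z ∧ ltM z y := by
  have := transfer h (∀' ∀' ((ltF (&0) (&1)).imp (∃' ((ltF (&0) (&2)) ⊓ (ltF (&2) (&1)))))) (by
    simp [Sentence.Realize, Formula.Realize, realize_ltF, ltM_rat, Fin.snoc]
    intro a b h1; exact exists_between h1)
  simp [Sentence.Realize, Formula.Realize, realize_ltF, Fin.snoc] at this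
  exact this x y h1

theorem t_up (h : M ⊨ LO.completeTheory ℚ) (x : M) : ∃ z, ltM x z := by
  have := transfer h (∀' ∃' (ltF (&0) (&1))) (by
    simp [Sentence.Realize, Formula.Realize, realize_ltF, ltM_rat, Fin.snoc]
    intro a; exact exists_gt a)
  simp [Sentence.Realize, Formula.Realize, realize_ltF, Fin.snoc] at this
  exact this x

theorem t_down (h : M ⊨ LO.completeTheory ℚ) (x : M) : ∃ z, ltM z x := by
  have := transfer h (∀' ∃' (ltF (&1) (&0))) (by
    simp [Sentence.Realize, Formula.Realize, realize_ltF, ltM_rat, Fin.snoc]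
    intro a; exact exists_lt a)
  simp [Sentence.Realize, Formula.Realize, realize_ltF, Fin.snoc] at this
  exact this x

theorem t_const (h : M ⊨ LO.completeTheory ℚ) (i j : ℕ) (hij : i < j) :
    ltM (constM i : M) (constM j) := by
  have := transfer h (ltF (cT i) (cT j)) (by
    simp [Sentence.Realize, Formula.Realize, realize_ltF, realize_cT, ltM_rat, constM_rat, hij])
  simpa [Sentence.Realize, Formula.Realize, realize_ltF, realize_cT] using this

end transferred

/-- The linear order on a model. -/
noncomputable def modelOrder {M : Type} [LO.Structure M] (h : M ⊨ LO.completeTheory ℚ) :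
    LinearOrder M :=
  letI : IsStrictTotalOrder M ltM :=
    { irrefl := t_irrefl h
      trans := t_trans h
      trichotomous := t_total h }
  letI : DecidableRel (ltM : M → M → Prop) := Classical.decRel _
  linearOrderOfSTO ltM

/-- Order preserving finite relation. -/
def OIso {M : Type} [LinearOrder M] (R : Set (M × M)) : Prop :=
  ∀ p ∈ R, ∀ q ∈ R, (p.1 < q.1 ↔ p.2 < q.2)

theorem OIso.eq {M : Type} [LinearOrder M] {R : Set (M × M)} (h : OIso R)
    {p q : M × M} (hp : p ∈ R) (hq : q ∈ R) : p.1 = q.1 ↔ p.2 = q.2 := by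
  have h1 := h p hp q hq
  have h2 := h q hq p hp
  constructor
  · intro e
    exact le_antisymm (not_lt.1 fun x => absurd (h2.2 x) (by simp [e]))
      (not_lt.1 fun x => absurd (h1.2 x) (by simp [e]))
  · intro e
    exact le_antisymm (not_lt.1 fun x => absurd (h2.1 x) (by simp [e]))
      (not_lt.1 fun x => absurd (h1.1 x) (by simp [e]))

theorem OIso.swap {M : Type} [LinearOrder M] {R : Set (M × M)} (h : OIso R) :
    OIso (Prod.swap '' R) := by
  rintro _ ⟨p, hp, rfl⟩ _ ⟨q, hq, rfl⟩
  exact (h p hp q hq).symm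

theorem OIso.extend {M : Type} [LinearOrder M] [DenselyOrdered M] [NoMinOrder M]
    [NoMaxOrder M] [Nonempty M] {R : Set (M × M)} (h : OIso R) (hf : R.Finite) (x : M) :
    ∃ y, OIso (insert (x, y) R) := by
  classical
  by_cases hx : ∃ p ∈ R, p.1 = x
  · obtain ⟨p, hp, rfl⟩ := hx
    refine ⟨p.2, ?_⟩
    have : insert (p.1, p.2) R = R := Set.insert_eq_of_mem hp
    rw [this]; exact h
  · push Not at hx
    obtain ⟨m, h1, h2⟩ := Order.exists_between_finsets
      ((hf.toFinset.filter (fun p => p.1 < x)).image Prod.snd)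
      ((hf.toFinset.filter (fun p => x < p.1)).image Prod.snd) (by
        intro s hs t ht
        simp only [Finset.mem_image, Finset.mem_filter, Set.Finite.mem_toFinset] at hs ht
        obtain ⟨p, ⟨hp, hpx⟩, rfl⟩ := hs
        obtain ⟨q, ⟨hq, hqx⟩, rfl⟩ := ht
        exact (h p hp q hq).1 (hpx.trans hqx))
    have a1 : ∀ p ∈ R, p.1 < x → p.2 < m := fun p hp hpx => h1 _ (by
      simp only [Finset.mem_image, Finset.mem_filter, Set.Finite.mem_toFinset]
      exact ⟨p, ⟨hp, hpx⟩, rfl⟩)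
    have a2 : ∀ p ∈ R, x < p.1 → m < p.2 := fun p hp hpx => h2 _ (by
      simp only [Finset.mem_image, Finset.mem_filter, Set.Finite.mem_toFinset]
      exact ⟨p, ⟨hp, hpx⟩, rfl⟩)
    refine ⟨m, ?_⟩
    rintro p (rfl | hp) q (rfl | hq)
    · simp
    · refine ⟨a2 q hq, fun hm => ?_⟩
      rcases lt_or_gt_of_ne (hx q hq) with hl | hl
      · exact absurd hm (a1 q hq hl).not_gt
      · exact hl
    · refine ⟨a1 p hp, fun hm => ?_⟩
      rcases lt_or_gt_of_ne (hx p hp) with hl | hl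
      · exact hl
      · exact absurd hm (a2 p hp hl).not_gt
    · exact h p hp q hq

theorem term_cases {α : Type} (t : LO.Term α) : (∃ i, t = Term.var i) ∨ ∃ k, t = cT k := by
  cases t with
  | var i => exact Or.inl ⟨i, rfl⟩
  | @func l f ts =>
    match l, f, ts with
    | 0, f, ts =>
      right
      refine ⟨f, ?_⟩
      unfold cT
      have : ts = ![] := by funext i; exact i.elim0
      rw [this]; rfl
    | (l+1), f, ts => exact (show Empty from f).elim

section QE
variable {M : Type} [LO.Structure M] [LinearOrder M]

theorem term_mem {α : Type} (t : LO.Term α) : ∃ N : ℕ, ∀ (R : Set (M × M)),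
    (∀ k < N, ((constM k : M), (constM k : M)) ∈ R) → ∀ u v : α → M, (∀ i, (u i, v i) ∈ R) →
    (t.realize u, t.realize v) ∈ R := by
  rcases term_cases t with ⟨i, rfl⟩ | ⟨k, rfl⟩
  · exact ⟨0, fun R _ u v huv => huv i⟩
  · refine ⟨k + 1, fun R hR u v _ => ?_⟩
    rw [realize_cT, realize_cT]
    exact hR k (Nat.lt_succ_self k)

theorem qe_aux [DenselyOrdered M] [NoMinOrder M] [NoMaxOrder M] [Nonempty M]
    (hlt : ∀ x y : M, ltM x y ↔ x < y) {α : Type} {n : ℕ} (φ : LO.BoundedFormula α n) :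
    ∃ N : ℕ, ∀ (R : Set (M × M)), R.Finite → OIso R →
      (∀ k < N, ((constM k : M), (constM k : M)) ∈ R) →
      ∀ (u v : α → M) (xs ys : Fin n → M), (∀ i, (u i, v i) ∈ R) → (∀ i, (xs i, ys i) ∈ R) →
      (φ.Realize u xs ↔ φ.Realize v ys) := by
  induction φ with
  | falsum => exact ⟨0, fun _ _ _ _ _ _ _ _ _ _ => Iff.rfl⟩
  | @equal n t₁ t₂ =>
    obtain ⟨N₁, h₁⟩ := term_mem (M := M) t₁
    obtain ⟨N₂, h₂⟩ := term_mem (M := M) t₂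
    refine ⟨max N₁ N₂, fun R _ hO hc u v xs ys hu hx => ?_⟩
    have hux : ∀ i, (Sum.elim u xs i, Sum.elim v ys i) ∈ R := by
      rintro (i | i)
      · exact hu i
      · exact hx i
    exact hO.eq (h₁ R (fun k hk => hc k (lt_max_of_lt_left hk)) _ _ hux)
      (h₂ R (fun k hk => hc k (lt_max_of_lt_right hk)) _ _ hux)
  | @rel n l r ts =>
    match l, r, ts with
    | 0, r, ts => exact (show Empty from r).elim
    | 1, r, ts => exact (show Empty from r).elim
    | (l+3), r, ts => exact (show Empty from r).elim
    | 2, r, ts =>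
      have e : (BoundedFormula.rel r ts : LO.BoundedFormula α n) = ltF (ts 0) (ts 1) := by
        unfold ltF Relations.boundedFormula₂ Relations.boundedFormula
        have : ts = ![ts 0, ts 1] := by
          funext i; fin_cases i <;> rfl
        rw [← this]; rfl
      rw [e]
      obtain ⟨N₁, h₁⟩ := term_mem (M := M) (ts 0)
      obtain ⟨N₂, h₂⟩ := term_mem (M := M) (ts 1)
      refine ⟨max N₁ N₂, fun R _ hO hc u v xs ys hu hx => ?_⟩
      have hux : ∀ i, (Sum.elim u xs i, Sum.elim v ys i) ∈ R := by
        rintro (i | i)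
        · exact hu i
        · exact hx i
      rw [realize_ltF, realize_ltF, hlt, hlt]
      exact hO _ (h₁ R (fun k hk => hc k (lt_max_of_lt_left hk)) _ _ hux) _
        (h₂ R (fun k hk => hc k (lt_max_of_lt_right hk)) _ _ hux)
  | imp f g ih₁ ih₂ =>
    obtain ⟨N₁, h₁⟩ := ih₁
    obtain ⟨N₂, h₂⟩ := ih₂
    refine ⟨max N₁ N₂, fun R hf hO hc u v xs ys hu hx => ?_⟩
    rw [BoundedFormula.realize_imp, BoundedFormula.realize_imp,
      h₁ R hf hO (fun k hk => hc k (lt_max_of_lt_left hk)) u v xs ys hu hx,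
      h₂ R hf hO (fun k hk => hc k (lt_max_of_lt_right hk)) u v xs ys hu hx]
  | all f ih =>
    obtain ⟨N, hN⟩ := ih
    have main : ∀ (R : Set (M × M)), R.Finite → OIso R →
      (∀ k < N, ((constM k : M), (constM k : M)) ∈ R) →
      ∀ (u v : α → M) (xs ys : Fin _ → M), (∀ i, (u i, v i) ∈ R) → (∀ i, (xs i, ys i) ∈ R) →
      ∀ x, ∃ y, (f.Realize u (Fin.snoc xs x) ↔ f.Realize v (Fin.snoc ys y)) := by
      intro R hf hO hc u v xs ys hu hx x
      obtain ⟨y, hy⟩ := hO.extend hf x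
      refine ⟨y, hN _ (hf.insert _) hy (fun k hk => Or.inr (hc k hk)) u v _ _
        (fun i => Or.inr (hu i)) ?_⟩
      intro i
      refine Fin.lastCases ?_ (fun i => ?_) i
      · simp
      · simpa using Or.inr (hx i)
    refine ⟨N, fun R hf hO hc u v xs ys hu hx => ?_⟩
    rw [BoundedFormula.realize_all, BoundedFormula.realize_all]
    constructor
    · intro H y
      obtain ⟨x, hxy⟩ := main (Prod.swap '' R) (hf.image _) hO.swap
        (fun k hk => ⟨_, hc k hk, rfl⟩) v u ys xs (fun i => ⟨_, hu i, rfl⟩)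
        (fun i => ⟨_, hx i, rfl⟩) y
      exact hxy.2 (H x)
    · intro H x
      obtain ⟨y, hxy⟩ := main R hf hO hc u v xs ys hu hx x
      exact hxy.2 (H y)

/-- Quantifier elimination, local form. -/
theorem qe_loc [DenselyOrdered M] [NoMinOrder M] [NoMaxOrder M] [Nonempty M]
    (hlt : ∀ x y : M, ltM x y ↔ x < y)
    {α : Type} [Finite α] (φ : LO.Formula α) :
    ∃ N : ℕ, ∀ u v : α → M, (∀ i j, u i < u j ↔ v i < v j) →
      (∀ i, ∀ k < N, (constM k < u i ↔ constM k < v i) ∧ (u i < constM k ↔ v i < constM k)) →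
      (φ.Realize u ↔ φ.Realize v) := by
  obtain ⟨N, hN⟩ := qe_aux (M := M) hlt φ
  refine ⟨N, fun u v h1 h2 => ?_⟩
  refine hN (Set.range (fun i => (u i, v i)) ∪
      (fun k => ((constM k : M), (constM k : M))) '' Set.Iio N)
    ((Set.finite_range _).union ((Set.finite_Iio N).image _)) ?_
    (fun k hk => Or.inr ⟨k, hk, rfl⟩) u v _ _ (fun i => Or.inl ⟨i, rfl⟩) (fun i => i.elim0)
  rintro p (⟨i, rfl⟩ | ⟨k, hk, rfl⟩) q (⟨j, rfl⟩ | ⟨l, hl, rfl⟩)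
  · exact h1 i j
  · exact (h2 i l hl).2
  · exact (h2 j k hk).1
  · exact Iff.rfl

/-- Quantifier elimination, global form. -/
theorem qe_glob [DenselyOrdered M] [NoMinOrder M] [NoMaxOrder M] [Nonempty M]
    (hlt : ∀ x y : M, ltM x y ↔ x < y)
    {α : Type} [Finite α] (u v : α → M) (h1 : ∀ i j, u i < u j ↔ v i < v j)
    (h2 : ∀ i k, (constM k < u i ↔ constM k < v i) ∧ (u i < constM k ↔ v i < constM k))
    (φ : LO.Formula α) : φ.Realize u ↔ φ.Realize v := by
  obtain ⟨N, hN⟩ := qe_loc (M := M) hlt φ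
  exact hN u v h1 (fun i k _ => h2 i k)

/-- Order information contained in equality of types. -/
theorem sameType_order (hlt : ∀ x y : M, ltM x y ↔ x < y) {m : ℕ} {u v : Fin m → M}
    (h : SameType LO ∅ u v) :
    (∀ i j, u i < u j ↔ v i < v j) ∧
    (∀ i k, (constM k < u i ↔ constM k < v i) ∧ (u i < constM k ↔ v i < constM k)) := by
  refine ⟨fun i j => ?_, fun i k => ⟨?_, ?_⟩⟩
  · have := h 0 (ltF (Term.var (Sum.inl (Sum.inl i))) (Term.var (Sum.inl (Sum.inl j))))
      (fun i => i.elim0) (fun i => i.elim0)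
    simpa [Formula.Realize, realize_ltF, hlt] using this
  · have := h 0 (ltF (cT k) (Term.var (Sum.inl (Sum.inl i))))
      (fun i => i.elim0) (fun i => i.elim0)
    simpa [Formula.Realize, realize_ltF, realize_cT, hlt] using this
  · have := h 0 (ltF (Term.var (Sum.inl (Sum.inl i))) (cT k))
      (fun i => i.elim0) (fun i => i.elim0)
    simpa [Formula.Realize, realize_ltF, realize_cT, hlt] using this

/-- Tuples extended by one element in matching position have the same type. -/
theorem qe_pair [DenselyOrdered M] [NoMinOrder M] [NoMaxOrder M] [Nonempty M]
    (hlt : ∀ x y : M, ltM x y ↔ x < y) {m : ℕ} (x y : M) (u v : Fin m → M)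
    (hx : ∀ k, constM k < x) (hy : ∀ k, constM k < y)
    (h1 : ∀ i j, u i < u j ↔ v i < v j)
    (h2 : ∀ i k, (constM k < u i ↔ constM k < v i) ∧ (u i < constM k ↔ v i < constM k))
    (h3 : ∀ i, (x < u i ↔ y < v i) ∧ (u i < x ↔ v i < y))
    (φ : LO.Formula (Fin 1 ⊕ Fin m)) :
    φ.Realize (Sum.elim (fun _ => x) u) ↔ φ.Realize (Sum.elim (fun _ => y) v) := by
  apply qe_glob hlt
  · rintro (i | i) (j | j)
    · simp
    · exact (h3 j).1
    · exact (h3 i).2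
    · exact h1 i j
  · rintro (i | i) k
    · simp [hx k, hy k, (hx k).not_gt, (hy k).not_gt]
    · exact h2 i k

/-- By saturation there are infinite elements below a given one. -/
theorem inf_below (hlt : ∀ x y : M, ltM x y ↔ x < y) (hc : StrictMono (constM : ℕ → M))
    {κ : Cardinal.{0}} (hκ : ℵ₀ < κ) (hsat : Saturated LO M κ) (e : M)
    (he : ∀ k, constM k < e) : ∃ d : M, (∀ k, constM k < d) ∧ d < e := by
  let G : FP LO M 1 :=
    ⟨1, (ltF (Term.var (Sum.inl (Sum.inl 0))) (Term.var (Sum.inl (Sum.inr 0))), fun _ => e)⟩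
  let F : ℕ → FP LO M 1 := fun k =>
    ⟨1, (ltF (cT k) (Term.var (Sum.inl (Sum.inl 0))), fun _ => e)⟩
  have hG : ∀ d : Fin 1 → M, G.Realize d ↔ d 0 < e := fun d => by
    simp [G, FP.Realize, Formula.Realize, realize_ltF, hlt]
  have hF : ∀ k (d : Fin 1 → M), (F k).Realize d ↔ constM k < d 0 := fun k d => by
    simp [F, FP.Realize, Formula.Realize, realize_ltF, realize_cT, hlt]
  obtain ⟨d, hd⟩ := hsat 1 {e} (insert G (Set.range F)) (by
      rw [Cardinal.mk_singleton]
      exact Cardinal.one_lt_aleph0.trans hκ) (by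
      rintro _ (rfl | ⟨k, rfl⟩) i
      · rfl
      · rfl) (by
      intro s hs
      have : ∀ᶠ n : ℕ in Filter.atTop, ∀ H ∈ s, H.Realize (fun _ : Fin 1 => (constM n : M)) := by
        rw [Filter.eventually_all_finset]
        intro H hH
        rcases hs hH with rfl | ⟨k, rfl⟩
        · exact Filter.Eventually.of_forall fun n => (hG _).2 (he n)
        · filter_upwards [Filter.eventually_gt_atTop k] with n hn
          exact (hF _ _).2 (hc hn)
      obtain ⟨n, hn⟩ := this.exists
      exact ⟨_, hn⟩)
  exact ⟨d 0, fun k => (hF k d).1 (hd _ (Or.inr ⟨k, rfl⟩)), (hG d).1 (hd _ (Or.inl rfl))⟩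

/-- Infinite elements below finitely many given infinite ones. -/
theorem inf_below_finset (hlt : ∀ x y : M, ltM x y ↔ x < y) (hc : StrictMono (constM : ℕ → M))
    {κ : Cardinal.{0}} (hκ : ℵ₀ < κ) (hsat : Saturated LO M κ) (e : M)
    (he : ∀ k, constM k < e) (S : Set M) (hS : S.Finite) :
    ∃ d : M, (∀ k, constM k < d) ∧ d < e ∧ ∀ s ∈ S, (∀ k, constM k < s) → d < s := by
  induction S, hS using Set.Finite.induction_on with
  | empty =>
    obtain ⟨d, h1, h2⟩ := inf_below hlt hc hκ hsat e he
    exact ⟨d, h1, h2, by simp⟩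
  | @insert x S _ _ ih =>
    obtain ⟨d, h1, h2, h3⟩ := ih
    by_cases hx : ∀ k, constM k < x
    · obtain ⟨d', h1', h2'⟩ := inf_below hlt hc hκ hsat (min d x)
        (fun k => lt_min (h1 k) (hx k))
      refine ⟨d', h1', (h2'.trans_le (min_le_left _ _)).trans h2, ?_⟩
      rintro s (rfl | hs) hs'
      · exact h2'.trans_le (min_le_right _ _)
      · exact (h2'.trans_le (min_le_left _ _)).trans (h3 s hs hs')
    · refine ⟨d, h1, h2, ?_⟩
      rintro s (rfl | hs) hs'
      · exact absurd hs' hx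
      · exact h3 s hs hs'

theorem above_finset [NoMaxOrder M] (e : M) (S : Set M) (hS : S.Finite) :
    ∃ d : M, e < d ∧ ∀ s ∈ S, s < d := by
  have hne : Nonempty M := ⟨e⟩
  obtain ⟨m, hm⟩ := (hS.insert e).bddAbove
  obtain ⟨d, hd⟩ := exists_gt m
  exact ⟨d, (hm (Or.inl rfl)).trans_lt hd, fun s hs => (hm (Or.inr hs)).trans_lt hd⟩

theorem main_thm [DenselyOrdered M] [NoMinOrder M] [NoMaxOrder M]
    (hlt : ∀ x y : M, ltM x y ↔ x < y) (hc : StrictMono (constM : ℕ → M))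
    (κ : Cardinal.{0}) (hκ : ℵ₀ < κ)
    (hsat : Saturated LO M κ)
    (a b : M) (hab : a < b) (hca : ∀ n : ℕ, constM n < a) :
    TpEq LO (fun _ : Fin 1 => a) (fun _ : Fin 1 => b) ∧
    IsolatedOver LO (fun _ : Fin 1 => b) (fun _ : Fin 1 => a) ∧
    ¬ IsolatedOver LO (fun _ : Fin 1 => a) (fun _ : Fin 1 => b) ∧
    ¬ ForksOver (Tp LO (Set.range fun _ : Fin 1 => b) (fun _ : Fin 1 => a)) ∅ ∧
    ¬ ForksOver (Tp LO (Set.range fun _ : Fin 1 => a) (fun _ : Fin 1 => b)) ∅ ∧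
    ∀ a' b' c' : M, TpEq LO ![a', b'] ![a, b] → TpEq LO ![b', c'] ![a, b] →
      ForksOver (Tp LO ({a', c'} : Set M) (fun _ : Fin 1 => b')) ∅ := by
  have hne : Nonempty M := ⟨a⟩
  have hcb : ∀ n : ℕ, constM n < b := fun n => (hca n).trans hab
  refine ⟨?_, ?_, ?_, ?_, ?_, ?_⟩
  · intro ψ
    apply qe_glob hlt
    · simp
    · intro i k
      simp [hca k, hcb k, (hca k).not_gt, (hcb k).not_gt]
  · refine ⟨ltF (Term.var (Sum.inl (Sum.inr 0))) (Term.var (Sum.inl (Sum.inl 0))), ?_, ?_⟩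
    · simpa [Formula.Realize, realize_ltF, hlt] using hab
    · intro a' ha' ψ hψ
      have ha : a < a' 0 := by
        simpa [Formula.Realize, realize_ltF, hlt] using ha'
      have e : a' = fun _ => a' 0 := by
        funext i; rw [Subsingleton.elim i 0]
      rw [e]
      refine (qe_pair hlt b (a' 0) _ _ hcb (fun k => (hca k).trans ha) ?_ ?_ ?_ ψ).1 hψ
      · simp
      · simp
      · simp [hab, ha, hab.not_gt, ha.not_gt]
  · rintro ⟨φ, h1, h2⟩
    obtain ⟨N, hN⟩ := qe_loc (M := M) hlt φ
    have hx : (constM N : M) < constM (N + 1) := hc (Nat.lt_succ_self N)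
    have key := h2 (fun _ => constM N) ((hN _ _ ?_ ?_).1 h1)
      (ltF (cT N) (Term.var (Sum.inl (Sum.inl 0)))) (by
        simpa [Formula.Realize, realize_ltF, realize_cT, hlt] using hca N)
    · simp [Formula.Realize, realize_ltF, realize_cT, hlt] at key
    · rintro (i | i) (j | j) <;> simp [hab, hab.not_gt, hcb N, (hcb N).not_gt]
    · rintro (i | i) k hk
      · simp [hca k, (hca k).not_gt, hc hk, (hc hk).not_gt]
      · simp
  · rintro ⟨m, φ, c, k, h1, h2, h3⟩
    obtain ⟨d, d1, d2, d3⟩ := inf_below_finset hlt hc hκ hsat b hcb _ (Set.finite_range (c 0))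
    have hd : φ.Realize (Sum.elim (fun _ => d) (c 0)) := by
      refine h2 (fun _ => d) ?_
      rintro ⟨l, ψ, e⟩ ⟨he, hψ⟩
      have he' : e = fun _ => b := by
        funext i
        obtain ⟨_, h⟩ := he i
        exact h.symm
      subst he'
      refine (qe_pair hlt a d _ _ hca d1 ?_ ?_ ?_ ψ).1 hψ
      · simp
      · simp
      · simp [hab, d2, hab.not_gt, d2.not_gt]
    obtain ⟨d', e1, e2, e3⟩ := inf_below_finset hlt hc hκ hsat b hcb
      (⋃ i ∈ Set.Iio k, Set.range (c i))
      ((Set.finite_Iio k).biUnion fun i _ => Set.finite_range (c i))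
    refine h3 (Finset.range k) (by simp) ⟨fun _ => d', fun i hi => ?_⟩
    obtain ⟨o1, o2⟩ := sameType_order hlt (h1 i)
    refine (qe_pair hlt d' d _ _ e1 d1 o1 o2 ?_ φ).2 hd
    intro j
    by_cases hj : ∀ k, constM k < c i j
    · have hj0 : ∀ k, constM k < c 0 j := fun k => (o2 j k).1.1 (hj k)
      have f1 := e3 (c i j) (Set.mem_biUnion (Finset.mem_range.1 hi) ⟨j, rfl⟩) hj
      have f2 := d3 (c 0 j) ⟨j, rfl⟩ hj0
      simp [f1, f2, f1.not_gt, f2.not_gt]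
    · push Not at hj
      obtain ⟨r, hr⟩ := hj
      have hr0 : c 0 j ≤ constM r := not_lt.1 fun h => absurd ((o2 j r).1.2 h) hr.not_gt
      have f1 := hr.trans_lt (e1 r)
      have f2 := hr0.trans_lt (d1 r)
      simp [f1, f2, f1.not_gt, f2.not_gt]
  · rintro ⟨m, φ, c, k, h1, h2, h3⟩
    obtain ⟨d, d2, d3⟩ := above_finset a _ (Set.finite_range (c 0))
    have d1 : ∀ k, constM k < d := fun k => (hca k).trans d2
    have hd : φ.Realize (Sum.elim (fun _ => d) (c 0)) := by
      refine h2 (fun _ => d) ?_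
      rintro ⟨l, ψ, e⟩ ⟨he, hψ⟩
      have he' : e = fun _ => a := by
        funext i
        obtain ⟨_, h⟩ := he i
        exact h.symm
      subst he'
      refine (qe_pair hlt b d _ _ hcb d1 ?_ ?_ ?_ ψ).1 hψ
      · simp
      · simp
      · simp [hab, d2, hab.not_gt, d2.not_gt]
    obtain ⟨d', e2, e3⟩ := above_finset a
      (⋃ i ∈ Set.Iio k, Set.range (c i))
      ((Set.finite_Iio k).biUnion fun i _ => Set.finite_range (c i))
    refine h3 (Finset.range k) (by simp) ⟨fun _ => d', fun i hi => ?_⟩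
    obtain ⟨o1, o2⟩ := sameType_order hlt (h1 i)
    refine (qe_pair hlt d' d _ _ (fun k => (hca k).trans e2) d1 o1 o2 ?_ φ).2 hd
    intro j
    have f1 := e3 (c i j) (Set.mem_biUnion (Finset.mem_range.1 hi) ⟨j, rfl⟩)
    have f2 := d3 (c 0 j) ⟨j, rfl⟩
    simp [f1, f2, f1.not_gt, f2.not_gt]
  · intro a' b' c' h1 h2
    have hlt1 : a' < b' := by
      have := h1 (ltF (Term.var (Sum.inl 0)) (Term.var (Sum.inl 1)))
      simp [Formula.Realize, realize_ltF, hlt] at this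
      exact this.2 hab
    have hlt2 : b' < c' := by
      have := h2 (ltF (Term.var (Sum.inl 0)) (Term.var (Sum.inl 1)))
      simp [Formula.Realize, realize_ltF, hlt] at this
      exact this.2 hab
    have hca' : ∀ k, constM k < a' := fun k => by
      have := h1 (ltF (cT k) (Term.var (Sum.inl 0)))
      simp [Formula.Realize, realize_ltF, realize_cT, hlt] at this
      exact this.2 (hca k)
    choose up hup using fun x : M => exists_gt x
    let s : ℕ → M × M := fun n => Nat.rec (a', c') (fun _ p => (up p.2, up (up p.2))) n
    have s0 : s 0 = (a', c') := rfl
    have ss : ∀ n, s (n + 1) = (up (s n).2, up (up (s n).2)) := fun n => rfl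
    have slt : ∀ n, (s n).1 < (s n).2 := by
      intro n
      cases n with
      | zero => exact hlt1.trans hlt2
      | succ n => rw [ss]; exact hup _
    have snext : ∀ n, (s n).2 < (s (n + 1)).1 := fun n => by rw [ss]; exact hup _
    have smono : StrictMono fun n => (s n).1 :=
      strictMono_nat_of_lt_succ fun n => (slt n).trans (snext n)
    have sdisj : ∀ i j, i < j → (s i).2 < (s j).1 := fun i j hij =>
      (snext i).trans_le (smono.monotone hij)
    have sinf : ∀ n k, constM k < (s n).1 := fun n k =>
      (hca' k).trans_le (smono.monotone (Nat.zero_le n))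
    have sinf2 : ∀ n k, constM k < (s n).2 := fun n k => (sinf n k).trans (slt n)
    let φ : LO.Formula (Fin 1 ⊕ Fin 2) :=
      ltF (Term.var (Sum.inl (Sum.inr 0))) (Term.var (Sum.inl (Sum.inl 0))) ⊓
      ltF (Term.var (Sum.inl (Sum.inl 0))) (Term.var (Sum.inl (Sum.inr 1)))
    have hφ : ∀ (x : Fin 1 → M) (y : Fin 2 → M), φ.Realize (Sum.elim x y) ↔
        y 0 < x 0 ∧ x 0 < y 1 := fun x y => by
      simp [φ, Formula.Realize, realize_ltF, hlt]
    refine ⟨2, φ, fun n => ![(s n).1, (s n).2], 2, ?_, ?_, ?_⟩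
    · intro n k ψ e he
      apply qe_glob hlt
      · rintro (i | i) (j | j)
        · fin_cases i <;> fin_cases j <;>
            simp [slt n, (slt n).not_gt, slt 0, (slt 0).not_gt]
        · exact (he j).elim
        · exact (he i).elim
        · exact (he i).elim
      · rintro (i | i) l
        · fin_cases i <;>
            simp [sinf n l, sinf2 n l, sinf 0 l, sinf2 0 l, (sinf n l).not_gt,
              (sinf2 n l).not_gt, (sinf 0 l).not_gt, (sinf2 0 l).not_gt]
        · exact (he i).elim
    · intro x hx
      have := hx ⟨2, (φ, ![a', c'])⟩ ⟨by
        intro i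
        fin_cases i
        · exact Or.inl rfl
        · exact Or.inr rfl, (hφ _ _).2 ⟨hlt1, hlt2⟩⟩
      exact this
    · rintro S hS ⟨x, hx⟩
      obtain ⟨i, j, hij, rfl⟩ := Finset.card_eq_two.1 hS
      have hi := (hφ _ _).1 (hx i (by simp))
      have hj := (hφ _ _).1 (hx j (by simp))
      simp at hi hj
      rcases lt_or_gt_of_ne hij with h | h
      · exact absurd (hi.2.trans ((sdisj i j h).trans hj.1)) (lt_irrefl _)
      · exact absurd (hj.2.trans ((sdisj j i h).trans hi.1)) (lt_irrefl _)

end QE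


/-- **Remark 2.5 (i).** In a monster model of `Th(ℚ, <, (n)_{n<ω})` (the
Ehrenfeucht example), if `c_n < a < b` for all `n`, then `tp(a) = tp(b)`,
`tp(b/a)` is isolated, `tp(a/b)` is not isolated, neither forks over `∅`, and
whenever `tp(a', b') = tp(b', c') = tp(a, b)` the type `tp(b'/a'c')` forks over
`∅`. -/
theorem remark_2_5_i
    (Mb : Type) [LO.Structure Mb] (hMb : Mb ⊨ LO.completeTheory ℚ)
    (κ : Cardinal.{0}) (hκ : LO.card + ℵ₀ < κ)
    (hsat : Saturated LO Mb κ) (hhom : StronglyHomogeneous LO Mb κ)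
    (a b : Mb) (hab : ltM a b) (hca : ∀ n : ℕ, ltM (constM n) a) :
    TpEq LO (fun _ : Fin 1 => a) (fun _ : Fin 1 => b) ∧
    IsolatedOver LO (fun _ : Fin 1 => b) (fun _ : Fin 1 => a) ∧
    ¬ IsolatedOver LO (fun _ : Fin 1 => a) (fun _ : Fin 1 => b) ∧
    ¬ ForksOver (Tp LO (Set.range fun _ : Fin 1 => b) (fun _ : Fin 1 => a)) ∅ ∧
    ¬ ForksOver (Tp LO (Set.range fun _ : Fin 1 => a) (fun _ : Fin 1 => b)) ∅ ∧
    ∀ a' b' c' : Mb, TpEq LO ![a', b'] ![a, b] → TpEq LO ![b', c'] ![a, b] →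
      ForksOver (Tp LO ({a', c'} : Set Mb) (fun _ : Fin 1 => b')) ∅ := by
  letI : LinearOrder Mb := modelOrder hMb
  have hlt : ∀ x y : Mb, ltM x y ↔ x < y := fun _ _ => Iff.rfl
  haveI : DenselyOrdered Mb := ⟨fun x y h => t_dense hMb x y h⟩
  haveI : NoMinOrder Mb := ⟨fun x => t_down hMb x⟩
  haveI : NoMaxOrder Mb := ⟨fun x => t_up hMb x⟩
  exact main_thm hlt (fun i j hij => t_const hMb i j hij) κ
    ((self_le_add_left ℵ₀ LO.card).trans_lt hκ) hsat a b hab hca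

end KimPaper
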